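/- Let r > 0, set V := ℍ ∩ B(0, r) where ℍ = {z ∈ ℂ : Im z > 0}, and let f be holomorphic on V with a continuous extension to V ∪ [0, r). Suppose there is an injective holomorphic function φ : B(0, 1) → ℂ with f([0, r)) ⊆ Γ := φ([0, 1)). Then there exists r' ∈ (0, r] such that f has a holomorphic extension F to B(0, r') \ ℝ_{≤0}, given by F(z) = f(z) for Im z ≥ 0 and F(z) = φ( conj( φ^{-1}( f( conj z ) ) ) ) for Im z < 0; in particular, for z ∈ B(0, r') with Im z < 0 the value f(conj z) lies in φ(B(0, 1)), so the formula is well defined. -/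

import Mathlib

open Metric Set

open Filter Topology Complex in
lemma inj_inverse_aux (φ : ℂ → ℂ) (hφ : DifferentiableOn ℂ φ (ball (0 : ℂ) 1))
    (hφinj : InjOn φ (ball (0 : ℂ) 1)) :
    ∃ ψ : ℂ → ℂ, (∀ w ∈ ball (0 : ℂ) 1, ψ (φ w) = w) ∧ IsOpen (φ '' ball (0 : ℂ) 1) ∧
      DifferentiableOn ℂ ψ (φ '' ball (0 : ℂ) 1) := by
  have hψ : ∀ w ∈ ball (0 : ℂ) 1, Function.invFunOn φ (ball (0 : ℂ) 1) (φ w) = w :=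
    fun w hw => hφinj.leftInvOn_invFunOn hw
  set ψ := Function.invFunOn φ (ball (0 : ℂ) 1) with hψdef
  have hA : AnalyticOnNhd ℂ φ (ball (0 : ℂ) 1) := hφ.analyticOnNhd isOpen_ball
  have hnc : ∀ w ∈ ball (0 : ℂ) 1, ¬ ∀ᶠ z in 𝓝 w, φ z = φ w := by
    intro w hw h
    have h2 : ∀ᶠ z in 𝓝 w, z = w := by
      filter_upwards [h, isOpen_ball.mem_nhds hw] with z hz hz'
      exact hφinj hz' hw hz
    have h3 : ∀ᶠ z in 𝓝[≠] w, z = w := h2.filter_mono nhdsWithin_le_nhds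
    obtain ⟨z, hz, hz'⟩ := (h3.and self_mem_nhdsWithin).exists
    exact hz' hz
  have hle : ∀ w ∈ ball (0 : ℂ) 1, 𝓝 (φ w) ≤ map φ (𝓝 w) := fun w hw =>
    (hA w hw).eventually_constant_or_nhds_le_map_nhds.resolve_left (hnc w hw)
  have hopen : IsOpen (φ '' ball (0 : ℂ) 1) := by
    rw [isOpen_iff_mem_nhds]
    rintro _ ⟨w, hw, rfl⟩
    exact hle w hw (image_mem_map (isOpen_ball.mem_nhds hw))
  have hcont : ∀ w ∈ ball (0 : ℂ) 1, ContinuousAt ψ (φ w) := by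
    intro w hw
    have : Tendsto ψ (𝓝 (φ w)) (𝓝 w) := by
      refine (map_mono (hle w hw)).trans ?_
      rw [map_map]
      have : (ψ ∘ φ) =ᶠ[𝓝 w] id := by
        filter_upwards [isOpen_ball.mem_nhds hw] with z hz using hψ z hz
      rw [map_congr this, map_id]
    unfold ContinuousAt
    rwa [hψ w hw]
  refine ⟨ψ, hψ, hopen, ?_⟩
  rintro _ ⟨w, hw, rfl⟩
  refine (analyticAt_of_differentiable_on_punctured_nhds_of_continuousAt ?_
    (hcont w hw)).differentiableAt.differentiableWithinAt
  have hd : ∀ᶠ z in 𝓝[≠] w, deriv φ z ≠ 0 := by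
    refine ((hA w hw).deriv.eventually_eq_zero_or_eventually_ne_zero).resolve_left ?_
    intro h0
    obtain ⟨ε, hε, hball⟩ := Metric.eventually_nhds_iff_ball.mp
      (h0.and (isOpen_ball.mem_nhds hw))
    apply hnc w hw
    filter_upwards [ball_mem_nhds w hε] with z hz
    refine isOpen_ball.is_const_of_deriv_eq_zero (convex_ball w ε).isPreconnected
      (hφ.mono fun y hy => (hball y hy).2) (fun y hy => (hball y hy).1) hz (mem_ball_self hε)
  rw [eventually_nhdsWithin_iff] at hd ⊢
  have hc : Tendsto ψ (𝓝 (φ w)) (𝓝 w) := by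
    have := hcont w hw
    unfold ContinuousAt at this
    rwa [hψ w hw] at this
  filter_upwards [hc.eventually hd, hopen.mem_nhds (mem_image_of_mem φ hw)] with y hy hy' hne
  obtain ⟨v, hv, rfl⟩ := hy'
  rw [hψ v hv] at hy
  have hvw : v ≠ w := by rintro rfl; exact hne rfl
  have hdv : HasDerivAt φ (deriv φ v) (ψ (φ v)) := by
    rw [hψ v hv]; exact (hA v hv).differentiableAt.hasDerivAt
  refine (hdv.of_local_left_inverse (hcont v hv) (hy hvw) ?_).differentiableAt
  filter_upwards [hopen.mem_nhds (mem_image_of_mem φ hv)] with y hy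
  obtain ⟨u, hu, rfl⟩ := hy
  rw [hψ u hu]

open Complex Interval in
lemma morera_line_aux (G : ℂ → ℂ) (D : Set ℂ) (hD : IsOpen D) (hc : ContinuousOn G D)
    (hd : ∀ z ∈ D, z.im ≠ 0 → DifferentiableAt ℂ G z) : DifferentiableOn ℂ G D := by
  refine (isConservativeOn_and_continuousOn_iff_isDifferentiableOn hD).mp ⟨?_, hc⟩
  intro z w hzw
  rw [← add_eq_zero_iff_eq_neg, wedgeIntegral_add_wedgeIntegral_eq]
  have hcr : ContinuousOn G ([[z.re, w.re]] ×ℂ [[z.im, w.im]]) := hc.mono hzw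
  have key : ∀ a b : ℝ, [[a, b]] ⊆ [[z.im, w.im]] → 0 ∉ Ioo (min a b) (max a b) →
      (∫ x : ℝ in z.re..w.re, G (x + a * I)) - (∫ x : ℝ in z.re..w.re, G (x + b * I)) +
      I • (∫ y : ℝ in a..b, G (w.re + y * I)) - I • (∫ y : ℝ in a..b, G (z.re + y * I)) = 0 := by
    intro a b hab h0
    have := integral_boundary_rect_eq_zero_of_continuousOn_of_differentiableOn G
      (⟨z.re, a⟩ : ℂ) (⟨w.re, b⟩ : ℂ)
      (hcr.mono (inter_subset_inter subset_rfl (preimage_mono hab))) (by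
        intro x hx
        obtain ⟨hx1, hx2⟩ := hx
        refine (hd x (hzw ⟨?_, ?_⟩) ?_).differentiableWithinAt
        · exact Ioo_subset_Icc_self hx1
        · exact hab (Ioo_subset_Icc_self hx2)
        · intro h
          apply h0
          have : x.im ∈ Ioo (min a b) (max a b) := hx2
          rwa [h] at this)
    simpa using this
  by_cases h0 : (0 : ℝ) ∈ [[z.im, w.im]]
  · have h1 := key z.im 0 (uIcc_subset_uIcc left_mem_uIcc h0) (by
      intro h
      rcases le_total z.im 0 with h' | h'
      · rw [max_eq_right h'] at h; exact lt_irrefl _ h.2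
      · rw [min_eq_right h'] at h; exact lt_irrefl _ h.1)
    have h2 := key 0 w.im (uIcc_subset_uIcc h0 right_mem_uIcc) (by
      intro h
      rcases le_total 0 w.im with h' | h'
      · rw [min_eq_left h'] at h; exact lt_irrefl _ h.1
      · rw [max_eq_left h'] at h; exact lt_irrefl _ h.2)
    have hi : ∀ t ∈ [[z.re, w.re]], ∀ a b : ℝ, [[a, b]] ⊆ [[z.im, w.im]] →
        IntervalIntegrable (fun y : ℝ => G (t + y * I)) MeasureTheory.volume a b := by
      intro t ht a b hab
      refine ContinuousOn.intervalIntegrable (hcr.comp (by fun_prop) ?_)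
      intro y hy
      refine ⟨?_, ?_⟩
      · simpa using ht
      · simpa using hab hy
    have a1 := intervalIntegral.integral_add_adjacent_intervals
      (hi w.re right_mem_uIcc z.im 0 (uIcc_subset_uIcc left_mem_uIcc h0))
      (hi w.re right_mem_uIcc 0 w.im (uIcc_subset_uIcc h0 right_mem_uIcc))
    have a2 := intervalIntegral.integral_add_adjacent_intervals
      (hi z.re left_mem_uIcc z.im 0 (uIcc_subset_uIcc left_mem_uIcc h0))
      (hi z.re left_mem_uIcc 0 w.im (uIcc_subset_uIcc h0 right_mem_uIcc))
    rw [← a1, ← a2]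
    simp only [smul_eq_mul] at h1 h2 ⊢
    linear_combination h1 + h2
  · exact key z.im w.im subset_rfl (fun h => h0 (Ioo_subset_Icc_self h))

/-- Example 2.13 (Schwarz reflection at an analytic arc): let `V = ℍ ∩ B(0, r)`, let `f` be
holomorphic on `V` with a continuous extension to `V ∪ [0, r)` mapping `[0, r)` into the
analytic arc `Γ = φ([0,1))`, where `φ : B(0,1) → ℂ` is injective and holomorphic. Then for
some `0 < r' ≤ r` the map `f` extends holomorphically to `B(0, r') \ ℝ_{≤0}` by
`F z = f z` for `Im z ≥ 0` and `F z = φ (conj (φ⁻¹ (f (conj z))))` for `Im z < 0`;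
in particular `f (conj z) ∈ φ(B(0,1))` there, so the formula is well defined. -/
theorem schwarz_reflection_analytic_arc (r : ℝ) (hr : 0 < r) (f φ : ℂ → ℂ)
    (hf : DifferentiableOn ℂ f ({z : ℂ | 0 < z.im} ∩ ball (0 : ℂ) r))
    (hfc : ContinuousOn f (({z : ℂ | 0 < z.im} ∩ ball (0 : ℂ) r) ∪
      (Complex.ofReal '' Ico (0 : ℝ) r)))
    (hφ : DifferentiableOn ℂ φ (ball (0 : ℂ) 1))
    (hφinj : InjOn φ (ball (0 : ℂ) 1))
    (hΓ : f '' (Complex.ofReal '' Ico (0 : ℝ) r) ⊆ φ '' (Complex.ofReal '' Ico (0 : ℝ) 1)) :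
    ∃ r' : ℝ, 0 < r' ∧ r' ≤ r ∧ ∃ F : ℂ → ℂ,
      DifferentiableOn ℂ F (ball (0 : ℂ) r' \ {z : ℂ | z.im = 0 ∧ z.re ≤ 0}) ∧
      (∀ z ∈ ball (0 : ℂ) r' \ {z : ℂ | z.im = 0 ∧ z.re ≤ 0}, 0 ≤ z.im → F z = f z) ∧
      (∀ z ∈ ball (0 : ℂ) r' \ {z : ℂ | z.im = 0 ∧ z.re ≤ 0}, z.im < 0 →
        ∃ w ∈ ball (0 : ℂ) 1, φ w = f ((starRingEnd ℂ) z) ∧ F z = φ ((starRingEnd ℂ) w)) := by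
  obtain ⟨ψ, hψ, hopen, hψd⟩ := inj_inverse_aux φ hφ hφinj
  set S : Set ℂ := ({z : ℂ | 0 < z.im} ∩ ball (0 : ℂ) r) ∪ (Complex.ofReal '' Ico (0 : ℝ) r)
    with hS
  have hreal : ∀ x : ℝ, 0 ≤ x → x < r → ∃ t : ℝ, (t : ℂ) ∈ ball (0 : ℂ) 1 ∧ φ t = f x := by
    intro x hx hxr
    obtain ⟨_, ⟨t, ht, rfl⟩, h⟩ := hΓ (mem_image_of_mem f (mem_image_of_mem _ ⟨hx, hxr⟩))
    refine ⟨t, ?_, h⟩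
    simpa [abs_of_nonneg ht.1] using ht.2
  have h0S : (0 : ℂ) ∈ S := Or.inr ⟨0, ⟨le_rfl, hr⟩, by simp⟩
  have hf0 : f 0 ∈ φ '' ball (0 : ℂ) 1 := by
    obtain ⟨t, ht, h⟩ := hreal 0 le_rfl hr
    exact ⟨t, ht, by simpa using h⟩
  obtain ⟨δ, hδ, hδS⟩ := Metric.mem_nhdsWithin_iff.mp
    ((hfc 0 h0S) (hopen.mem_nhds hf0))
  refine ⟨min δ r, lt_min hδ hr, min_le_right _ _, ?_⟩
  set D : Set ℂ := ball (0 : ℂ) (min δ r) \ {z : ℂ | z.im = 0 ∧ z.re ≤ 0} with hD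
  have hDo : IsOpen D := by
    refine isOpen_ball.sdiff ?_
    exact (isClosed_eq Complex.continuous_im continuous_const).inter
      (isClosed_le Complex.continuous_re continuous_const)
  -- points of D in the closed upper half plane
  have hup : ∀ z ∈ D, 0 ≤ z.im → z ∈ S ∧ f z ∈ φ '' ball (0 : ℂ) 1 := by
    intro z hz him
    have hzb := mem_ball_zero_iff.mp hz.1
    have hzS : z ∈ S := by
      rcases him.lt_or_eq with h | h
      · exact Or.inl ⟨h, mem_ball_zero_iff.mpr (hzb.trans_le (min_le_right _ _))⟩
      · refine Or.inr ⟨z.re, ⟨?_, ?_⟩, ?_⟩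
        · by_contra hneg
          exact hz.2 ⟨h.symm, (not_le.mp hneg).le⟩
        · exact ((le_abs_self _).trans (Complex.abs_re_le_norm z)).trans_lt
            (hzb.trans_le (min_le_right _ _))
        · apply Complex.ext <;> simp [← h]
    exact ⟨hzS, hδS ⟨mem_ball_zero_iff.mpr (hzb.trans_le (min_le_left _ _)), hzS⟩⟩
  have hconj : ∀ z ∈ D, (starRingEnd ℂ) z ∈ D := by
    intro z hz
    refine ⟨?_, ?_⟩
    · simpa using hz.1
    · intro h
      exact hz.2 (by simpa using h)
  set g : ℂ → ℂ := fun z => ψ (f z) with hg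
  have hgc : ContinuousOn g (D ∩ {z | 0 ≤ z.im}) := by
    refine hψd.continuousOn.comp (hfc.mono ?_) ?_
    · exact fun z hz => (hup z hz.1 hz.2).1
    · exact fun z hz => (hup z hz.1 hz.2).2
  have hgd : ∀ z ∈ D, 0 < z.im → DifferentiableAt ℂ g z := by
    intro z hz him
    have hV : ({z : ℂ | 0 < z.im} ∩ ball (0 : ℂ) r) ∈ nhds z := by
      refine IsOpen.mem_nhds ?_ ⟨him, ?_⟩
      · exact (isOpen_lt continuous_const Complex.continuous_im).inter isOpen_ball
      · exact ball_subset_ball (min_le_right _ _) hz.1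
    exact (hψd.differentiableAt (hopen.mem_nhds (hup z hz him.le).2)).comp z
      (hf.differentiableAt hV)
  have hgreal : ∀ z ∈ D, z.im = 0 → (starRingEnd ℂ) (g z) = g z := by
    intro z hz him
    have hzb := mem_ball_zero_iff.mp hz.1
    have hze : z = (z.re : ℂ) := by apply Complex.ext <;> simp [him]
    obtain ⟨t, ht, h⟩ := hreal z.re
      (by by_contra hneg; exact hz.2 ⟨him, (not_le.mp hneg).le⟩)
      (((le_abs_self _).trans (Complex.abs_re_le_norm z)).trans_lt
            (hzb.trans_le (min_le_right _ _)))
    rw [← hze] at h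
    simp only [hg, ← h, hψ _ ht, Complex.conj_ofReal]
  set g' : ℂ → ℂ := (starRingEnd ℂ) ∘ g ∘ (starRingEnd ℂ) with hg'
  have hg'c : ContinuousOn g' (D ∩ {z | z.im ≤ 0}) := by
    refine Complex.continuous_conj.comp_continuousOn
      (hgc.comp Complex.continuous_conj.continuousOn ?_)
    intro z hz
    exact ⟨hconj z hz.1, by simpa using hz.2⟩
  set G : ℂ → ℂ := fun z => if 0 ≤ z.im then g z else g' z with hG
  have hGup : ∀ z, 0 ≤ z.im → G z = g z := fun z hz => if_pos hz
  have hGlo : ∀ z, z.im < 0 → G z = g' z := fun z hz => if_neg (not_le.mpr hz)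
  have hGlo' : ∀ z ∈ D, z.im ≤ 0 → G z = g' z := by
    intro z hz him
    rcases him.lt_or_eq with h | h
    · exact hGlo z h
    · rw [hGup z h.ge]
      have : (starRingEnd ℂ) z = z := Complex.conj_eq_iff_im.mpr h
      simp only [hg', Function.comp_apply, this, hgreal z hz h]
  have hGd : ∀ z ∈ D, z.im ≠ 0 → DifferentiableAt ℂ G z := by
    intro z hz him
    rcases lt_or_gt_of_ne him with h | h
    · have h1 : DifferentiableAt ℂ g' z := by
        rw [hg', differentiableAt_conj_conj_iff]
        exact hgd _ (hconj z hz) (by simpa using h)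
      refine h1.congr_of_eventuallyEq ?_
      filter_upwards [(isOpen_lt Complex.continuous_im continuous_const).mem_nhds h] with y hy
      exact hGlo y hy
    · refine (hgd z hz h).congr_of_eventuallyEq ?_
      filter_upwards [(isOpen_lt continuous_const Complex.continuous_im).mem_nhds h] with y hy
      exact hGup y (le_of_lt hy)
  have hGc : ContinuousOn G D := by
    intro z hz
    by_cases him : z.im = 0
    · have c1 : ContinuousWithinAt G (D ∩ {z | 0 ≤ z.im}) z :=
        (hgc z ⟨hz, him.ge⟩).congr (fun y hy => hGup y hy.2) (hGup z him.ge)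
      have c2 : ContinuousWithinAt G (D ∩ {z | z.im ≤ 0}) z :=
        (hg'c z ⟨hz, him.le⟩).congr (fun y hy => hGlo' y hy.1 hy.2) (hGlo' z hz him.le)
      refine (c1.union c2).mono fun y hy => ?_
      rcases le_total 0 y.im with h | h
      · exact Or.inl ⟨hy, h⟩
      · exact Or.inr ⟨hy, h⟩
    · exact (hGd z hz him).continuousAt.continuousWithinAt
  have hGdiff := morera_line_aux G D hDo hGc hGd
  have hginv : ∀ z ∈ D, 0 ≤ z.im → g z ∈ ball (0 : ℂ) 1 ∧ φ (g z) = f z := by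
    intro z hz him
    obtain ⟨w, hw, h⟩ := (hup z hz him).2
    simp only [hg, ← h, hψ w hw]
    exact ⟨hw, trivial⟩
  have hGm : MapsTo G D (ball (0 : ℂ) 1) := by
    intro z hz
    rcases le_or_gt 0 z.im with h | h
    · rw [hGup z h]; exact (hginv z hz h).1
    · rw [hGlo z h]
      have := (hginv _ (hconj z hz) (by simpa using h.le)).1
      simpa [hg'] using this
  refine ⟨φ ∘ G, hφ.comp hGdiff hGm, ?_, ?_⟩
  · intro z hz him
    rw [Function.comp_apply, hGup z him]
    exact (hginv z hz him).2
  · intro z hz him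
    obtain ⟨h1, h2⟩ := hginv _ (hconj z hz) (by simpa using him.le)
    refine ⟨_, h1, h2, ?_⟩
    rw [Function.comp_apply, hGlo z him]
    rfl
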